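/- arXiv:1503.00325 — 2 statements merged into one kernel-verified Lean document; each statement's English description precedes it below -/
import Mathlib

section
/- (Distortion theorem) Let f be an (s,p)-valent function in the unit disk D_1 having in D_1 exactly s zeroes x_1, …, x_s (counted with multiplicity). Let P(x) = A·Π_{j=1}^s (x − x_j), where the constant A ∈ ℂ is chosen so that the constant term of the Taylor series of f(x)/P(x) at 0 equals 1. Then for every x ∈ D_1, ((1−|x|)/(1+|x|))^{2p} ≤ |f(x)/P(x)| ≤ ((1+|x|)/(1−|x|))^{2p}. -/
-- The order of vanishing of `g` at `z` (zero if `g` is not analytic at `z`).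
open scoped Classical in
noncomputable def ordAt (g : ℂ → ℂ) (z : ℂ) : ℕ∞ :=
  if h : AnalyticAt ℂ g z then analyticOrderAt g z else 0

/-- The number of zeroes of `g` in `Ω`, counted with multiplicity. -/
noncomputable def solCount (g : ℂ → ℂ) (Ω : Set ℂ) : ℕ∞ :=
  ∑' z : Ω, ordAt g z

/-- `f` is `(s,p)`-valent in `Ω`: for every polynomial `P` of degree at most `s`,
the equation `f = P` has at most `p` solutions in `Ω`, counted with multiplicity. -/
def IsSPValentOn (f : ℂ → ℂ) (Ω : Set ℂ) (s p : ℕ) : Prop :=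
  ∀ P : Polynomial ℂ, P.degree ≤ (s : ℕ) →
    solCount (fun z => f z - P.eval z) Ω ≤ (p : ℕ∞)

/-- `g` is `p`-valent in `Ω`: for every constant `c`, the equation `g = c` has
at most `p` solutions in `Ω`, counted with multiplicity. -/
def IsPValentOn (g : ℂ → ℂ) (Ω : Set ℂ) (p : ℕ) : Prop :=
  ∀ c : ℂ, solCount (fun z => g z - c) Ω ≤ (p : ℕ∞)

/-!
The quotient `g = f / P` is `p`-valent because `f - c P = P (g - c)`, and it does not vanish because
the zeros of `f` and `P` cancel. Hence `g` has an analytic logarithm and, for `n ≥ 1` and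
`m = n p + 1`, the power `h = g ^ (n / m)` is defined. On every circle `|w| = t` some value is
omitted by `h`: otherwise the `m` points `t ζ ^ j`, with `ζ` a primitive `m`-th root of unity,
would give `m` solutions of `g ^ n = t ^ m`, which has at most `n p` solutions.

A function `h` on the disk of centre `c` and radius `R` with this omission property satisfies
`|h' c| R ≤ 4 |h c|`. Normalise `|h c| = 1` and choose omitted values `e_j`, `j < N`, whose radial
coordinates `(|e_j| - 1) / (|e_j| + 1)` are the zeros of the Chebyshev polynomial `T_N`. The maximum
principle for `∏ (h c - e_j) (h z - h c) / ((z - c) (h z - e_j))` bounds `(|h' c| R) ^ N` by a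
constant times `4 ^ N`, since `[-1, 1]` has capacity `1 / 2`; let `N → ∞`.

For `h = g ^ (n / m)` and `n → ∞` this reads `|g' c / g c| R ≤ 4 p`. Precomposing `g` with disk
automorphisms gives `|g' a / g a| ≤ 4 p / (1 - |a| ^ 2)` on the unit disk, and integrating along
radii gives the theorem.
-/

open Metric Set

/-! ### Chebyshev nodes -/

/-- The angles `(2j+1)π/(2N)`, `j < N`, of the zeros of the Chebyshev polynomial `T_N`. -/
noncomputable def chebyshevAngle (N j : ℕ) : ℝ :=
  (2 * j + 1) * Real.pi / (2 * N)

/-- The zeros `cos ((2j+1)π/(2N))`, `j < N`, of the Chebyshev polynomial `T_N`. -/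
noncomputable def chebyshevNode (N j : ℕ) : ℝ :=
  Real.cos (chebyshevAngle N j)

section Chebyshev

open Polynomial

variable {N j : ℕ}

lemma chebyshevNode_mem_Ioo (hj : j < N) : chebyshevNode N j ∈ Ioo (-1) 1 := by
  have hN : (0 : ℝ) < N := by exact_mod_cast j.zero_le.trans_lt hj
  have hj' : (j : ℝ) + 1 ≤ N := by exact_mod_cast hj
  have angle_pos : 0 < chebyshevAngle N j := by rw [chebyshevAngle]; positivity
  have angle_lt_pi : chebyshevAngle N j < Real.pi := by
    rw [chebyshevAngle, div_lt_iff₀ (by positivity)]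
    nlinarith [Real.pi_pos]
  constructor
  · simpa [chebyshevNode] using
      Real.cos_lt_cos_of_nonneg_of_le_pi angle_pos.le le_rfl angle_lt_pi
  · simpa [chebyshevNode] using
      Real.cos_lt_cos_of_nonneg_of_le_pi le_rfl angle_lt_pi.le angle_pos

lemma eval_chebyshev_T_eq_prod (N : ℕ) (u : ℝ) :
    (Chebyshev.T ℝ N).eval u = 2 ^ (N - 1) * ∏ j ∈ Finset.range N, (u - chebyshevNode N j) := by
  have node_injOn : InjOn (chebyshevNode N) (Finset.range N : Set ℕ) :=
    (Finset.range N).nodup_map_iff_injOn.mp (Chebyshev.roots_T_real_nodup N)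
  have roots_eq : (Chebyshev.T ℝ N).roots = ((Finset.range N).image (chebyshevNode N)).val :=
    Chebyshev.roots_T_real N
  have card_roots : (Chebyshev.T ℝ N).roots.card = (Chebyshev.T ℝ N).natDegree := by
    rw [roots_eq, Finset.card_val, Finset.card_image_of_injOn node_injOn,
      Chebyshev.natDegree_T, Finset.card_range, Int.natAbs_natCast]
  have factorization := C_leadingCoeff_mul_prod_multiset_X_sub_C card_roots
  rw [roots_eq, Chebyshev.leadingCoeff_T, ← Finset.prod_eq_multiset_prod,
    Finset.prod_image node_injOn] at factorization
  rw [← factorization]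
  simp [eval_prod]

lemma mul_abs_sub_chebyshevAngle_le_abs_eval {φ : ℝ} (hN : N ≠ 0)
    (hφ : |φ - chebyshevAngle N j| ≤ Real.pi / (2 * N)) :
    2 / Real.pi * N * |φ - chebyshevAngle N j| ≤
      |(Chebyshev.T ℝ N).eval (Real.cos φ)| := by
  set θ := chebyshevAngle N j with hθ
  have hNpos : (0 : ℝ) < N := by positivity
  have angle_eq : N * φ = N * (φ - θ) + Real.pi / 2 + j * Real.pi := by
    rw [hθ, chebyshevAngle]; field
  have abs_angle : |N * (φ - θ)| = N * |φ - θ| := by rw [abs_mul, abs_of_pos hNpos]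
  have abs_angle_le : |N * (φ - θ)| ≤ Real.pi / 2 :=
    calc |N * (φ - θ)| = N * |φ - θ| := abs_angle
      _ ≤ N * (Real.pi / (2 * N)) := by gcongr
      _ = Real.pi / 2 := by field
  calc 2 / Real.pi * N * |φ - θ|
      = 2 / Real.pi * |N * (φ - θ)| := by rw [abs_angle, mul_assoc]
    _ ≤ |Real.sin (N * (φ - θ))| := Real.mul_abs_le_abs_sin abs_angle_le
    _ = |(Chebyshev.T ℝ N).eval (Real.cos φ)| := by
      rw [Chebyshev.T_real_cos, Int.cast_natCast, angle_eq, Real.cos_add_nat_mul_pi,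
        Real.cos_add_pi_div_two, abs_mul, abs_pow, abs_neg, abs_neg, abs_one, one_pow, one_mul]

lemma le_prod_erase_abs_cos_sub_chebyshevNode_of_ne {φ : ℝ} (hj : j < N)
    (hφ : |φ - chebyshevAngle N j| ≤ Real.pi / (2 * N))
    (hne : φ ≠ chebyshevAngle N j) :
    2 / Real.pi * N ≤
      2 ^ (N - 1) * ∏ i ∈ (Finset.range N).erase j, |Real.cos φ - chebyshevNode N i| := by
  set θ := chebyshevAngle N j
  set Q := ∏ i ∈ (Finset.range N).erase j, |Real.cos φ - chebyshevNode N i|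
  have hQ : 0 ≤ Q := Finset.prod_nonneg fun _ _ ↦ abs_nonneg _
  refine le_of_mul_le_mul_right ?_ (abs_pos.mpr (sub_ne_zero.mpr hne))
  calc 2 / Real.pi * N * |φ - θ|
      ≤ |(Chebyshev.T ℝ N).eval (Real.cos φ)| :=
        mul_abs_sub_chebyshevAngle_le_abs_eval (by lia) hφ
    _ = 2 ^ (N - 1) * ∏ i ∈ Finset.range N, |Real.cos φ - chebyshevNode N i| := by
        rw [eval_chebyshev_T_eq_prod, abs_mul, Finset.abs_prod, abs_of_pos (by positivity)]
    _ = 2 ^ (N - 1) * Q * |Real.cos φ - Real.cos θ| := by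
        rw [← Finset.prod_erase_mul _ _ (Finset.mem_range.mpr hj), mul_assoc, chebyshevNode]
    _ ≤ 2 ^ (N - 1) * Q * |φ - θ| :=
        mul_le_mul_of_nonneg_left (Real.abs_cos_sub_cos_le φ θ)
          (mul_nonneg (by positivity) hQ)

lemma le_prod_erase_abs_cos_sub_chebyshevNode {φ : ℝ} (hj : j < N)
    (hφ : |φ - chebyshevAngle N j| ≤ Real.pi / (2 * N)) :
    2 / Real.pi * N ≤
      2 ^ (N - 1) * ∏ i ∈ (Finset.range N).erase j, |Real.cos φ - chebyshevNode N i| := by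
  rcases ne_or_eq φ (chebyshevAngle N j) with hne | rfl
  · exact le_prod_erase_abs_cos_sub_chebyshevNode_of_ne hj hφ hne
  set θ := chebyshevAngle N j
  have hN : (0 : ℝ) < N := by exact_mod_cast j.zero_le.trans_lt hj
  have prod_continuous : Continuous fun t : ℝ ↦
      2 ^ (N - 1) * ∏ i ∈ (Finset.range N).erase j, |Real.cos t - chebyshevNode N i| := by
    fun_prop
  have closedBall_mem : closedBall θ (Real.pi / (2 * N)) ∈ nhdsWithin θ {θ}ᶜ :=
    mem_nhdsWithin_of_mem_nhds (closedBall_mem_nhds _ (by positivity))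
  refine ge_of_tendsto ((prod_continuous.tendsto θ).mono_left (nhdsWithin_le_nhds (s := {θ}ᶜ))) ?_
  filter_upwards [closedBall_mem, self_mem_nhdsWithin] with t ht ht_ne
  exact le_prod_erase_abs_cos_sub_chebyshevNode_of_ne hj ht ht_ne

lemma exists_abs_sub_chebyshevAngle_le {φ : ℝ} (hN : N ≠ 0) (hφ : φ ∈ Icc 0 Real.pi) :
    ∃ j < N, |φ - chebyshevAngle N j| ≤ Real.pi / (2 * N) := by
  have hNpos : (0 : ℝ) < N := by positivity
  suffices ∃ j < N, (j : ℝ) * Real.pi ≤ N * φ ∧ N * φ ≤ (j + 1) * Real.pi by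
    obtain ⟨j, hj, hle, hge⟩ := this
    refine ⟨j, hj, ?_⟩
    have offset_eq : φ - chebyshevAngle N j
        = (2 * (N * φ) - (2 * j + 1) * Real.pi) / (2 * N) := by rw [chebyshevAngle]; field
    rw [offset_eq, abs_div, abs_of_pos (by positivity : (0 : ℝ) < 2 * N)]
    gcongr
    rw [abs_le]
    constructor <;> linarith
  obtain ⟨M, rfl⟩ := Nat.exists_eq_succ_of_ne_zero hN
  have hφ0 := hφ.1
  rcases lt_or_ge ⌊(M.succ : ℝ) * φ / Real.pi⌋₊ M.succ with hlt | hge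
  · refine ⟨_, hlt, ?_, ?_⟩
    · rw [← le_div_iff₀ Real.pi_pos]
      exact Nat.floor_le (by positivity)
    · rw [← div_le_iff₀ Real.pi_pos]
      exact (Nat.lt_floor_add_one _).le
  · have hle := (Nat.le_floor_iff (by positivity)).mp hge
    rw [le_div_iff₀ Real.pi_pos] at hle
    refine ⟨M, M.lt_succ_self, le_trans ?_ hle, ?_⟩
    · gcongr; exact M.le_succ
    · push_cast; gcongr; exact hφ.2

lemma exists_inv_four_pow_le_prod_erase_abs_sub_chebyshevNode {u : ℝ} (hN : N ≠ 0)
    (hu : u ∈ Icc (-1) 1) :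
    ∃ j < N, (1 / 4 : ℝ) ^ N ≤
      ∏ i ∈ (Finset.range N).erase j, |u - chebyshevNode N i| / 2 := by
  obtain ⟨j, hj, angle_le⟩ :=
    exists_abs_sub_chebyshevAngle_le hN ⟨Real.arccos_nonneg u, Real.arccos_le_pi u⟩
  have prod_ge := le_prod_erase_abs_cos_sub_chebyshevNode hj angle_le
  rw [Real.cos_arccos hu.1 hu.2] at prod_ge
  refine ⟨j, hj, ?_⟩
  obtain ⟨M, rfl⟩ := Nat.exists_eq_add_one_of_ne_zero hN
  rw [Finset.prod_div_distrib, Finset.prod_const,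
    Finset.card_erase_of_mem (Finset.mem_range.mpr hj), Finset.card_range]
  rw [Nat.add_sub_cancel] at prod_ge ⊢
  have quarter_le : (1 / 4 : ℝ) ≤ 2 / Real.pi * (M + 1 : ℕ) :=
    calc (1 / 4 : ℝ) ≤ 2 / 4 * 1 := by norm_num
      _ ≤ 2 / Real.pi * (M + 1 : ℕ) := by
        gcongr
        · exact Real.pi_lt_four.le
        · simp
  set Q := ∏ i ∈ (Finset.range (M + 1)).erase j, |u - chebyshevNode (M + 1) i|
  calc (1 / 4 : ℝ) ^ (M + 1) = 1 / 4 / (2 ^ M * 2 ^ M) := by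
        rw [div_div, ← mul_pow, one_div_pow, pow_succ']; norm_num
    _ ≤ 2 ^ M * Q / (2 ^ M * 2 ^ M) := by gcongr; exact quarter_le.trans prod_ge
    _ = Q / 2 ^ M := mul_div_mul_left _ _ (by positivity)

end Chebyshev

/-! ### Omitted values -/

/-- Each value is attained by `g` at no more than `p` distinct points of `Ω`. Multiplicities are
ignored, so that the notion makes sense for maps between arbitrary types. -/
def AtMostToOneOn {α β : Type*} (g : α → β) (Ω : Set α) (p : ℕ) : Prop :=
  ∀ c, (Ω ∩ g ⁻¹' {c}).encard ≤ p

namespace AtMostToOneOn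

variable {α β γ : Type*} {g : α → β} {Ω : Set α} {p : ℕ}

lemma comp_injOn (hg : AtMostToOneOn g Ω p) {φ : γ → α} {S : Set γ} (hφ : MapsTo φ S Ω)
    (hφinj : InjOn φ S) : AtMostToOneOn (g ∘ φ) S p := by
  intro c
  have mapsTo_fiber : MapsTo φ (S ∩ (g ∘ φ) ⁻¹' {c}) (Ω ∩ g ⁻¹' {c}) :=
    fun _ hz ↦ ⟨hφ hz.1, hz.2⟩
  exact (encard_le_encard_of_injOn mapsTo_fiber (hφinj.mono inter_subset_left)).trans (hg c)

lemma comp (hg : AtMostToOneOn g Ω p) {k : β → γ} {n : ℕ} (hk : AtMostToOneOn k univ n) :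
    AtMostToOneOn (k ∘ g) Ω (n * p) := by
  intro c
  have fiber_finite : (k ⁻¹' {c}).Finite :=
    finite_of_encard_le_coe (by simpa only [univ_inter] using hk c)
  have fiber_card : fiber_finite.toFinset.card ≤ n := by
    rw [← ENat.natCast_le_natCast, ← fiber_finite.encard_eq_coe_toFinset_card]
    simpa only [univ_inter] using hk c
  calc (Ω ∩ (k ∘ g) ⁻¹' {c}).encard
      = (⋃ b ∈ fiber_finite.toFinset, Ω ∩ g ⁻¹' {b}).encard := by
        congr 1; ext; simp
    _ ≤ ∑ b ∈ fiber_finite.toFinset, (Ω ∩ g ⁻¹' {b}).encard := Finset.set_encard_biUnion_le _ _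
    _ ≤ ∑ _b ∈ fiber_finite.toFinset, (p : ℕ∞) := Finset.sum_le_sum fun b _ ↦ hg b
    _ = (fiber_finite.toFinset.card * p : ℕ) := by simp
    _ ≤ (n * p : ℕ) := by gcongr

end AtMostToOneOn

lemma atMostToOneOn_pow {R : Type*} [CommRing R] [IsDomain R] {n : ℕ} (hn : n ≠ 0) :
    AtMostToOneOn (fun z : R ↦ z ^ n) univ n := by
  classical
  intro c
  have fiber_eq : univ ∩ (fun z : R ↦ z ^ n) ⁻¹' {c}
      = ((Polynomial.nthRoots n c).toFinset : Set R) := by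
    ext z
    simp [Polynomial.mem_nthRoots (Nat.pos_of_ne_zero hn)]
  rw [fiber_eq, encard_coe_eq_coe_finsetCard, ENat.natCast_le_natCast]
  exact (Multiset.toFinset_card_le _).trans (Polynomial.card_nthRoots n c)

/-- The values that `h` omits on `Ω` meet every circle centred at the origin, of positive radius.
This is what the estimate of the derivative needs to know about a root of a `p`-valent function. -/
def OmitsValueOnEachCircle {α : Type*} (h : α → ℂ) (Ω : Set α) : Prop :=
  ∀ t > 0, ∃ e : ℂ, ‖e‖ = t ∧ e ∉ h '' Ω

lemma AtMostToOneOn.omitsValueOnEachCircle {α : Type*} {h k : α → ℂ} {Ω : Set α} {q m : ℕ}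
    (hk : AtMostToOneOn k Ω q) (hqm : q < m) (hpow : ∀ z ∈ Ω, h z ^ m = k z) :
    OmitsValueOnEachCircle h Ω := by
  intro t ht
  by_contra! circle_subset
  have hprim := Complex.isPrimitiveRoot_exp m (by lia)
  set ζ := Complex.exp (2 * Real.pi * Complex.I / m)
  have exists_preimage (j : ℕ) : ∃ z ∈ Ω, h z = t * ζ ^ j := by
    refine circle_subset _ ?_
    rw [norm_mul, norm_pow, hprim.norm'_eq_one (by lia), one_pow, mul_one,
      Complex.norm_of_nonneg ht.le]
  choose z hzΩ hz using exists_preimage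
  have z_injOn : InjOn z (Finset.range m : Set ℕ) := by
    intro i hi j hj hij
    have scaled_eq : (t : ℂ) * ζ ^ i = t * ζ ^ j := by rw [← hz, ← hz, hij]
    exact hprim.pow_inj (Finset.mem_range.mp hi) (Finset.mem_range.mp hj)
      (mul_left_cancel₀ (Complex.ofReal_ne_zero.mpr ht.ne') scaled_eq)
  have z_mem_fiber : MapsTo z (Finset.range m : Set ℕ) (Ω ∩ k ⁻¹' {(t : ℂ) ^ m}) := by
    intro j _
    refine ⟨hzΩ j, ?_⟩
    rw [mem_preimage, mem_singleton_iff, ← hpow _ (hzΩ j), hz, mul_pow, pow_right_comm,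
      hprim.pow_eq_one, one_pow, mul_one]
  have card_le := (encard_le_encard_of_injOn z_mem_fiber z_injOn).trans (hk _)
  rw [encard_coe_eq_coe_finsetCard, Finset.card_range, ENat.natCast_le_natCast] at card_le
  exact hqm.not_ge card_le

/-! ### The derivative at the centre -/

/-- The coordinate `(|w| - 1) / (|w| + 1)`, which maps the radii `0`, `1`, `∞` to `-1`, `0`, `1`
and in which the omitted values are placed at Chebyshev nodes. -/
noncomputable def radialCoord (w : ℂ) : ℝ :=
  (‖w‖ - 1) / (‖w‖ + 1)

lemma radialCoord_mem_Icc (w : ℂ) : radialCoord w ∈ Icc (-1) 1 := by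
  have hw := norm_nonneg w
  rw [radialCoord, mem_Icc, le_div_iff₀ (by positivity), div_le_iff₀ (by positivity)]
  constructor <;> linarith

lemma norm_sub_mul_norm_sub_mul_abs_radialCoord_sub_le {v : ℂ} (hv : ‖v‖ = 1) (w e : ℂ) :
    ‖w - v‖ * ‖v - e‖ * (|radialCoord w - radialCoord e| / 2) ≤ ‖w - e‖ := by
  have radialCoord_sub : |radialCoord w - radialCoord e| / 2
      = |‖w‖ - ‖e‖| / ((‖w‖ + 1) * (‖e‖ + 1)) := by
    have sub_eq : radialCoord w - radialCoord e
        = (‖w‖ - ‖e‖) * 2 / ((‖w‖ + 1) * (‖e‖ + 1)) := by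
      rw [radialCoord, radialCoord]; field
    rw [sub_eq, abs_div, abs_mul, abs_two, abs_of_pos (by positivity : 0 < (‖w‖ + 1) * (‖e‖ + 1))]
    ring
  have norm_w_sub : ‖w - v‖ ≤ ‖w‖ + 1 := hv ▸ norm_sub_le w v
  have norm_v_sub : ‖v - e‖ ≤ ‖e‖ + 1 := by
    rw [norm_sub_rev]
    exact hv ▸ norm_sub_le e v
  calc ‖w - v‖ * ‖v - e‖ * (|radialCoord w - radialCoord e| / 2)
      ≤ (‖w‖ + 1) * (‖e‖ + 1) * (|‖w‖ - ‖e‖| / ((‖w‖ + 1) * (‖e‖ + 1))) := by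
        rw [radialCoord_sub]; gcongr
    _ = |‖w‖ - ‖e‖| := mul_div_cancel₀ _ (by positivity)
    _ ≤ ‖w - e‖ := abs_norm_sub_norm_le w e

lemma OmitsValueOnEachCircle.exists_radialCoord_eq {α : Type*} {h : α → ℂ} {Ω : Set α}
    (hh : OmitsValueOnEachCircle h Ω) {u : ℝ} (hu : u ∈ Ioo (-1) 1) :
    ∃ e ∉ h '' Ω, radialCoord e = u := by
  have one_add_pos : 0 < 1 + u := by linarith [hu.1]
  have one_sub_pos : 0 < 1 - u := by linarith [hu.2]
  obtain ⟨e, norm_e, he⟩ := hh ((1 + u) / (1 - u)) (by positivity)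
  refine ⟨e, he, ?_⟩
  rw [radialCoord, norm_e]
  field

lemma exists_pos_le_norm_sub_of_notMem_image {X : Type*} [TopologicalSpace X] {h : X → ℂ}
    {K U : Set X} (hK : IsCompact K) (hKU : K ⊆ U) (hh : ContinuousOn h K)
    (hopen : IsOpen (h '' U)) :
    ∃ δ > 0, ∀ z ∈ K, ∀ e ∉ h '' U, δ ≤ ‖h z - e‖ := by
  obtain ⟨δ, hδ, thickening_subset⟩ :=
    (hK.image_of_continuousOn hh).exists_thickening_subset_open hopen (image_mono hKU)
  refine ⟨δ, hδ, fun z hz e he ↦ ?_⟩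
  contrapose! he
  refine thickening_subset (mem_thickening_iff.mpr ⟨h z, mem_image_of_mem h hz, ?_⟩)
  rwa [dist_comm, dist_eq_norm]

lemma exists_norm_sub_mul_norm_sub_le {X : Type*} [TopologicalSpace X] {h : X → ℂ}
    {K U : Set X} (hK : IsCompact K) (hKU : K ⊆ U) (hh : ContinuousOn h K)
    (hopen : IsOpen (h '' U)) (v : ℂ) :
    ∃ B ≥ 0, ∀ z ∈ K, ∀ e ∉ h '' U, ‖h z - v‖ * ‖v - e‖ ≤ B * ‖h z - e‖ := by
  obtain ⟨δ, hδ, le_norm_sub⟩ := exists_pos_le_norm_sub_of_notMem_image hK hKU hh hopen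
  obtain ⟨M, norm_sub_le_M⟩ := hK.exists_bound_of_continuousOn (hh.sub continuousOn_const)
  refine ⟨|M| * (|M| / δ + 1), by positivity, fun z hz e he ↦ ?_⟩
  have norm_hz_sub : ‖h z - v‖ ≤ |M| := (norm_sub_le_M z hz).trans (le_abs_self M)
  have hδe := le_norm_sub z hz e he
  have norm_v_sub : ‖v - e‖ ≤ (|M| / δ + 1) * ‖h z - e‖ :=
    calc ‖v - e‖ ≤ ‖v - h z‖ + ‖h z - e‖ := norm_sub_le_norm_sub_add_norm_sub v (h z) e
      _ ≤ |M| / δ * δ + ‖h z - e‖ := by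
        rw [norm_sub_rev v, div_mul_cancel₀ _ hδ.ne']; gcongr
      _ ≤ |M| / δ * ‖h z - e‖ + ‖h z - e‖ := by gcongr
      _ = (|M| / δ + 1) * ‖h z - e‖ := by ring
  calc ‖h z - v‖ * ‖v - e‖ ≤ |M| * ((|M| / δ + 1) * ‖h z - e‖) := by gcongr
    _ = |M| * (|M| / δ + 1) * ‖h z - e‖ := by ring

lemma norm_deriv_mul_pow_mul_norm_le_of_sphere {h G : ℂ → ℂ} {c : ℂ} {r M : ℝ} (N : ℕ)
    (hr : 0 < r) (hh : DifferentiableOn ℂ h (closedBall c r))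
    (hG : DifferentiableOn ℂ G (closedBall c r))
    (sphere_bound : ∀ z ∈ sphere c r, ‖h z - h c‖ ^ N * ‖G z‖ ≤ M) :
    (‖deriv h c‖ * r) ^ N * ‖G c‖ ≤ M := by
  have dslope_differentiableOn : DifferentiableOn ℂ (dslope h c) (closedBall c r) :=
    (Complex.differentiableOn_dslope (closedBall_mem_nhds c hr)).mpr hh
  have quotient_diffContOnCl : DiffContOnCl ℂ (fun z ↦ dslope h c z ^ N * G z) (ball c r) :=
    ((dslope_differentiableOn.pow N).mul hG).diffContOnCl_ball subset_rfl
  have quotient_sphere :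
      ∀ z ∈ frontier (ball c r), ‖dslope h c z ^ N * G z‖ ≤ M / r ^ N := by
    intro z hz
    rw [frontier_ball c hr.ne'] at hz
    rw [dslope_of_ne _ (ne_of_mem_sphere hz hr.ne'), slope_def_field, norm_mul, norm_pow, norm_div,
      mem_sphere_iff_norm.mp hz, div_pow, div_mul_eq_mul_div]
    gcongr
    exact sphere_bound z hz
  have quotient_center := Complex.norm_le_of_forall_mem_frontier_norm_le isBounded_ball
    quotient_diffContOnCl quotient_sphere (subset_closure (mem_ball_self hr))
  rw [dslope_same, norm_mul, norm_pow, le_div_iff₀ (by positivity)] at quotient_center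
  rwa [mul_pow, mul_right_comm]

lemma norm_deriv_mul_pow_card_le_of_sphere {ι : Type*} {h : ℂ → ℂ} {c : ℂ} {r M : ℝ}
    (hr : 0 < r) (hh : DifferentiableOn ℂ h (closedBall c r)) {e : ι → ℂ} {s : Finset ι}
    (he : ∀ i ∈ s, e i ∉ h '' closedBall c r)
    (sphere_bound : ∀ z ∈ sphere c r,
      ∏ i ∈ s, ‖h z - h c‖ * ‖h c - e i‖ / ‖h z - e i‖ ≤ M) :
    (‖deriv h c‖ * r) ^ s.card ≤ M := by
  have denominator_ne_zero : ∀ i ∈ s, ∀ z ∈ closedBall c r, h z - e i ≠ 0 := fun i hi z hz heq ↦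
    he i hi ⟨z, hz, sub_eq_zero.mp heq⟩
  set G : ℂ → ℂ := fun z ↦ ∏ i ∈ s, (h c - e i) / (h z - e i)
  have hG : DifferentiableOn ℂ G (closedBall c r) := DifferentiableOn.fun_finsetProd fun i hi ↦
    (differentiableOn_const _).div (hh.sub_const _) (denominator_ne_zero i hi)
  have G_center : G c = 1 := Finset.prod_eq_one fun i hi ↦
    div_self (denominator_ne_zero i hi c (mem_closedBall_self hr.le))
  have norm_pow_mul_norm_G (z : ℂ) : ‖h z - h c‖ ^ s.card * ‖G z‖
      = ∏ i ∈ s, ‖h z - h c‖ * ‖h c - e i‖ / ‖h z - e i‖ := by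
    rw [norm_prod, ← Finset.prod_const, ← Finset.prod_mul_distrib]
    exact Finset.prod_congr rfl fun i _ ↦ by rw [norm_div, mul_div_assoc]
  have center_bound := norm_deriv_mul_pow_mul_norm_le_of_sphere s.card hr hh hG
    fun z hz ↦ (norm_pow_mul_norm_G z).trans_le (sphere_bound z hz)
  rwa [G_center, norm_one, mul_one] at center_bound

lemma le_of_forall_pow_le_mul_pow {a b B : ℝ} (hb : 0 < b)
    (hab : ∀ N : ℕ, N ≠ 0 → a ^ N ≤ B * b ^ N) : a ≤ b := by
  by_contra! hlt
  have one_lt : 1 < a / b := (one_lt_div hb).mpr hlt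
  obtain ⟨n, hn⟩ := pow_unbounded_of_one_lt B one_lt
  have pow_le : (a / b) ^ (n + 1) ≤ B := by
    rw [div_pow, div_le_iff₀ (by positivity)]
    exact hab _ n.succ_ne_zero
  exact (hn.trans (pow_lt_pow_right₀ one_lt n.lt_succ_self)).not_ge pow_le

lemma prod_div_norm_sub_le_of_radialCoord_eq_chebyshevNode {N : ℕ} (hN : N ≠ 0) {v w : ℂ}
    (hv : ‖v‖ = 1) {e : ℕ → ℂ} (he : ∀ j < N, radialCoord (e j) = chebyshevNode N j) {B : ℝ}
    (hB : ∀ j < N, ‖w - v‖ * ‖v - e j‖ / ‖w - e j‖ ≤ B) :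
    ∏ j ∈ Finset.range N, ‖w - v‖ * ‖v - e j‖ / ‖w - e j‖ ≤ B * 4 ^ N := by
  obtain ⟨i, hi, le_prod_nodes⟩ :=
    exists_inv_four_pow_le_prod_erase_abs_sub_chebyshevNode hN (radialCoord_mem_Icc w)
  set G : ℕ → ℝ := fun j ↦ ‖w - v‖ * ‖v - e j‖ / ‖w - e j‖
  set V : ℕ → ℝ := fun j ↦ |radialCoord w - chebyshevNode N j| / 2
  have G_nonneg (j : ℕ) : 0 ≤ G j := by positivity
  have GV_le_one : ∀ j ∈ (Finset.range N).erase i, G j * V j ≤ 1 := by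
    intro j hj
    have hjN : j < N := Finset.mem_range.mp (Finset.mem_of_mem_erase hj)
    have V_eq : V j = |radialCoord w - radialCoord (e j)| / 2 := by rw [he j hjN]
    rw [V_eq, div_mul_eq_mul_div]
    refine div_le_one_of_le₀ ?_ (norm_nonneg _)
    exact norm_sub_mul_norm_sub_mul_abs_radialCoord_sub_le hv w (e j)
  have prod_erase_le : ∏ j ∈ (Finset.range N).erase i, G j ≤ 4 ^ N := by
    have prod_mul_le : (∏ j ∈ (Finset.range N).erase i, G j) * (1 / 4) ^ N ≤ 1 :=
      calc (∏ j ∈ (Finset.range N).erase i, G j) * (1 / 4) ^ N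
          ≤ (∏ j ∈ (Finset.range N).erase i, G j) * ∏ j ∈ (Finset.range N).erase i, V j := by
            gcongr
        _ = ∏ j ∈ (Finset.range N).erase i, G j * V j := Finset.prod_mul_distrib.symm
        _ ≤ 1 := Finset.prod_le_one (fun j _ ↦ by positivity) GV_le_one
    rwa [one_div_pow, mul_one_div, div_le_one (by positivity)] at prod_mul_le
  rw [← Finset.mul_prod_erase _ _ (Finset.mem_range.mpr hi)]
  exact mul_le_mul (hB i hi) prod_erase_le (Finset.prod_nonneg fun j _ ↦ G_nonneg j)
    ((G_nonneg i).trans (hB i hi))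

lemma OmitsValueOnEachCircle.norm_deriv_mul_le_four_of_isOpen_image {h : ℂ → ℂ} {U : Set ℂ}
    (hU : OmitsValueOnEachCircle h U) (hopen : IsOpen (h '' U)) {c : ℂ} {r : ℝ} (hr : 0 < r)
    (hrU : closedBall c r ⊆ U) (hh : DifferentiableOn ℂ h (closedBall c r)) (hc : ‖h c‖ = 1) :
    ‖deriv h c‖ * r ≤ 4 := by
  obtain ⟨B, hB, factor_le⟩ := exists_norm_sub_mul_norm_sub_le (isCompact_closedBall c r) hrU
    hh.continuousOn hopen (h c)
  refine le_of_forall_pow_le_mul_pow (B := B) four_pos fun N hN ↦ ?_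
  have exists_omitted : ∀ j < N, ∃ e ∉ h '' U, radialCoord e = chebyshevNode N j :=
    fun j hj ↦ hU.exists_radialCoord_eq (chebyshevNode_mem_Ioo hj)
  choose! e e_notMem radialCoord_e using exists_omitted
  have pow_card_le := norm_deriv_mul_pow_card_le_of_sphere (s := Finset.range N) (e := e) hr hh
    (M := B * 4 ^ N) (fun j hj he ↦ e_notMem j (Finset.mem_range.mp hj) (image_mono hrU he))
    fun z hz ↦ prod_div_norm_sub_le_of_radialCoord_eq_chebyshevNode hN hc radialCoord_e
      fun j hj ↦ div_le_of_le_mul₀ (norm_nonneg _) hB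
        (factor_le z (sphere_subset_closedBall hz) (e j) (e_notMem j hj))
  rwa [Finset.card_range] at pow_card_le

lemma OmitsValueOnEachCircle.const_mul {α : Type*} {h : α → ℂ} {Ω : Set α}
    (hh : OmitsValueOnEachCircle h Ω) {a : ℂ} (ha : a ≠ 0) :
    OmitsValueOnEachCircle (fun z ↦ a * h z) Ω := by
  intro t ht
  obtain ⟨e, norm_e, he⟩ := hh (t / ‖a‖) (by positivity)
  refine ⟨a * e, ?_, ?_⟩
  · rw [norm_mul, norm_e, mul_div_cancel₀ _ (norm_ne_zero_iff.mpr ha)]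
  · rintro ⟨z, hz, heq⟩
    exact he ⟨z, hz, mul_left_cancel₀ ha heq⟩

lemma OmitsValueOnEachCircle.norm_deriv_mul_le_four {h : ℂ → ℂ} {c : ℂ} {R : ℝ}
    (hh : OmitsValueOnEachCircle h (ball c R)) (hR : 0 < R)
    (hdiff : DifferentiableOn ℂ h (ball c R)) (hc : ‖h c‖ = 1) : ‖deriv h c‖ * R ≤ 4 := by
  rcases (hdiff.analyticOnNhd isOpen_ball).is_constant_or_isOpen
    (convex_ball c R).isPreconnected with ⟨w, h_const⟩ | h_open
  · have deriv_eq_zero : deriv h c = 0 := by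
      rw [(Filter.eventuallyEq_of_mem (ball_mem_nhds c hR) h_const).deriv_eq, deriv_const]
    simp [deriv_eq_zero]
  · have tendsto_radius : Filter.Tendsto (fun r ↦ ‖deriv h c‖ * r) (nhdsWithin R (Iio R))
        (nhds (‖deriv h c‖ * R)) :=
      (continuous_const_mul _).continuousWithinAt
    refine le_of_tendsto tendsto_radius ?_
    filter_upwards [Ioo_mem_nhdsLT hR] with r hr
    have closedBall_subset := closedBall_subset_ball (x := c) hr.2
    exact hh.norm_deriv_mul_le_four_of_isOpen_image (h_open _ subset_rfl isOpen_ball) hr.1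
      closedBall_subset (hdiff.mono closedBall_subset) hc

theorem OmitsValueOnEachCircle.norm_deriv_mul_le {h : ℂ → ℂ} {c : ℂ} {R : ℝ}
    (hh : OmitsValueOnEachCircle h (ball c R)) (hR : 0 < R)
    (hdiff : DifferentiableOn ℂ h (ball c R)) (hc : h c ≠ 0) :
    ‖deriv h c‖ * R ≤ 4 * ‖h c‖ := by
  have norm_pos : 0 < ‖h c‖ := norm_pos_iff.mpr hc
  have normalized := (hh.const_mul (inv_ne_zero hc)).norm_deriv_mul_le_four hR
    (hdiff.const_mul _) (by rw [inv_mul_cancel₀ hc, norm_one])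
  rwa [deriv_const_mul_field, norm_mul, norm_inv, mul_assoc, inv_mul_le_iff₀ norm_pos,
    mul_comm _ (4 : ℝ)] at normalized

/-! ### The logarithmic derivative -/

lemma exists_forall_mem_ball_hasDerivAt_logDeriv_and_exp_eq {g : ℂ → ℂ} {c : ℂ} {r : ℝ}
    (hr : 0 < r) (hg : DifferentiableOn ℂ g (ball c r)) (hne : ∀ z ∈ ball c r, g z ≠ 0) :
    ∃ F : ℂ → ℂ, ∀ z ∈ ball c r, HasDerivAt F (logDeriv g z) z ∧ Complex.exp (F z) = g z := by
  have hc : c ∈ ball c r := mem_ball_self hr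
  have logDeriv_differentiableOn : DifferentiableOn ℂ (logDeriv g) (ball c r) :=
    (hg.deriv isOpen_ball).div hg hne
  obtain ⟨F, hFc, hF⟩ :=
    logDeriv_differentiableOn.isExactOn_ball.with_val_at c (Complex.log (g c))
  have hasDerivAt_ratio : ∀ z ∈ ball c r,
      HasDerivAt (fun z ↦ Complex.exp (-F z) * g z) 0 z := by
    intro z hz
    have g_hasDerivAt := (hg.differentiableAt (isOpen_ball.mem_nhds hz)).hasDerivAt
    refine ((hF z hz).neg.cexp.mul g_hasDerivAt).congr_deriv ?_
    rw [logDeriv_apply]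
    field [hne z hz]
  refine ⟨F, fun z hz ↦ ⟨hF z hz, ?_⟩⟩
  have ratio_eq := isOpen_ball.is_const_of_deriv_eq_zero (convex_ball c r).isPreconnected
    (fun z hz ↦ (hasDerivAt_ratio z hz).differentiableAt.differentiableWithinAt)
    (fun z hz ↦ (hasDerivAt_ratio z hz).deriv) hz hc
  rwa [hFc, Complex.exp_neg, Complex.exp_neg, Complex.exp_log (hne c hc),
    inv_mul_cancel₀ (hne c hc), inv_mul_eq_one₀ (Complex.exp_ne_zero _)] at ratio_eq

namespace AtMostToOneOn

variable {g : ℂ → ℂ} {p : ℕ}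

lemma mul_norm_logDeriv_mul_le {c : ℂ} {R : ℝ} (hp : AtMostToOneOn g (ball c R) p) (hR : 0 < R)
    (hg : DifferentiableOn ℂ g (ball c R)) (hne : ∀ z ∈ ball c R, g z ≠ 0) {n : ℕ} (hn : n ≠ 0) :
    n * (‖logDeriv g c‖ * R) ≤ 4 * (n * p + 1 : ℕ) := by
  obtain ⟨F, hF⟩ := exists_forall_mem_ball_hasDerivAt_logDeriv_and_exp_eq hR hg hne
  have hc : c ∈ ball c R := mem_ball_self hR
  set m : ℕ := n * p + 1
  have hm : (m : ℂ) ≠ 0 := Nat.cast_ne_zero.mpr (n * p).succ_ne_zero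
  set h : ℂ → ℂ := fun z ↦ Complex.exp (n / m * F z)
  have h_hasDerivAt : ∀ z ∈ ball c R, HasDerivAt h (h z * (n / m * logDeriv g z)) z :=
    fun z hz ↦ ((hF z hz).1.const_mul _).cexp
  have h_pow : ∀ z ∈ ball c R, h z ^ m = g z ^ n := by
    intro z hz
    rw [← (hF z hz).2, ← Complex.exp_nat_mul, ← Complex.exp_nat_mul, ← mul_assoc,
      mul_div_cancel₀ _ hm]
  have h_omits : OmitsValueOnEachCircle h (ball c R) :=
    (hp.comp (atMostToOneOn_pow hn)).omitsValueOnEachCircle (Nat.lt_succ_self _) h_pow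
  have deriv_bound := h_omits.norm_deriv_mul_le hR
    (fun z hz ↦ (h_hasDerivAt z hz).differentiableAt.differentiableWithinAt)
    (Complex.exp_ne_zero _)
  rw [(h_hasDerivAt c hc).deriv, norm_mul, norm_mul, norm_div, Complex.norm_natCast,
    Complex.norm_natCast, mul_assoc, mul_comm (4 : ℝ)] at deriv_bound
  have ratio_bound := le_of_mul_le_mul_left deriv_bound (norm_pos_iff.mpr (Complex.exp_ne_zero _))
  rwa [mul_assoc, div_mul_eq_mul_div, div_le_iff₀ (by positivity)] at ratio_bound

theorem norm_logDeriv_mul_le {c : ℂ} {R : ℝ} (hp : AtMostToOneOn g (ball c R) p) (hR : 0 < R)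
    (hg : DifferentiableOn ℂ g (ball c R)) (hne : ∀ z ∈ ball c R, g z ≠ 0) :
    ‖logDeriv g c‖ * R ≤ 4 * p := by
  refine le_of_forall_pos_le_add fun ε hε ↦ ?_
  obtain ⟨n, hn⟩ := exists_nat_gt (4 / ε)
  have hn_pos : (0 : ℝ) < n := (by positivity : 0 < 4 / ε).trans hn
  have bound := hp.mul_norm_logDeriv_mul_le hR hg hne (Nat.cast_ne_zero.mp hn_pos.ne')
  rw [div_lt_iff₀ hε] at hn
  refine le_of_mul_le_mul_left ?_ hn_pos
  push_cast at bound
  linarith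

end AtMostToOneOn

/-- The automorphism `z ↦ (z + a) / (1 + conj a * z)` of the unit disk, which carries `0` to `a` and
so transfers estimates at the centre to the point `a`. -/
noncomputable def diskShift (a z : ℂ) : ℂ :=
  (z + a) / (1 + starRingEnd ℂ a * z)

section diskShift

variable {a : ℂ}

lemma norm_one_add_conj_mul_sq_sub (a z : ℂ) :
    ‖1 + starRingEnd ℂ a * z‖ ^ 2 - ‖z + a‖ ^ 2 = (1 - ‖a‖ ^ 2) * (1 - ‖z‖ ^ 2) := by
  simp only [← Complex.normSq_eq_norm_sq, Complex.normSq_apply, Complex.add_re, Complex.add_im,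
    Complex.mul_re, Complex.mul_im, Complex.conj_re, Complex.conj_im, Complex.one_re,
    Complex.one_im]
  ring

lemma one_sub_norm_sq_pos (ha : a ∈ ball 0 1) : 0 < 1 - ‖a‖ ^ 2 := by
  have norm_lt := mem_ball_zero_iff.mp ha
  nlinarith [norm_nonneg a]

lemma norm_add_lt_norm_one_add_conj_mul (ha : a ∈ ball 0 1) {z : ℂ} (hz : z ∈ ball 0 1) :
    ‖z + a‖ < ‖1 + starRingEnd ℂ a * z‖ := by
  refine lt_of_pow_lt_pow_left₀ 2 (norm_nonneg _) (sub_pos.mp ?_)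
  rw [norm_one_add_conj_mul_sq_sub]
  exact mul_pos (one_sub_norm_sq_pos ha) (one_sub_norm_sq_pos hz)

lemma one_add_conj_mul_ne_zero (ha : a ∈ ball 0 1) {z : ℂ} (hz : z ∈ ball 0 1) :
    1 + starRingEnd ℂ a * z ≠ 0 :=
  norm_pos_iff.mp ((norm_nonneg _).trans_lt (norm_add_lt_norm_one_add_conj_mul ha hz))

lemma mapsTo_diskShift (ha : a ∈ ball 0 1) : MapsTo (diskShift a) (ball 0 1) (ball 0 1) := by
  intro z hz
  rw [mem_ball_zero_iff, diskShift, norm_div]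
  have norm_lt := norm_add_lt_norm_one_add_conj_mul ha hz
  exact (div_lt_one ((norm_nonneg _).trans_lt norm_lt)).mpr norm_lt

lemma injOn_diskShift (ha : a ∈ ball 0 1) : InjOn (diskShift a) (ball 0 1) := by
  intro z hz w hw hzw
  rw [diskShift, diskShift, div_eq_div_iff (one_add_conj_mul_ne_zero ha hz)
    (one_add_conj_mul_ne_zero ha hw)] at hzw
  have determinant_mul : (1 - starRingEnd ℂ a * a) * (z - w) = 0 := by linear_combination hzw
  have determinant_ne_zero : 1 - starRingEnd ℂ a * a ≠ 0 := by
    rw [Complex.conj_mul']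
    exact_mod_cast (one_sub_norm_sq_pos ha).ne'
  exact sub_eq_zero.mp ((mul_eq_zero.mp determinant_mul).resolve_left determinant_ne_zero)

lemma differentiableOn_diskShift (ha : a ∈ ball 0 1) :
    DifferentiableOn ℂ (diskShift a) (ball 0 1) :=
  DifferentiableOn.div (by fun_prop) (by fun_prop) fun _ hz ↦ one_add_conj_mul_ne_zero ha hz

lemma diskShift_zero (a : ℂ) : diskShift a 0 = a := by simp [diskShift]

lemma hasDerivAt_diskShift_zero (a : ℂ) :
    HasDerivAt (diskShift a) ((1 - ‖a‖ ^ 2 : ℝ) : ℂ) 0 := by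
  have numerator : HasDerivAt (fun z : ℂ ↦ z + a) 1 0 := (hasDerivAt_id _).add_const a
  have denominator : HasDerivAt (fun z : ℂ ↦ 1 + starRingEnd ℂ a * z) (starRingEnd ℂ a) 0 := by
    simpa using ((hasDerivAt_id (0 : ℂ)).const_mul (starRingEnd ℂ a)).const_add 1
  refine (numerator.div denominator (by simp)).congr_deriv ?_
  simp [Complex.mul_conj']

end diskShift

lemma AtMostToOneOn.norm_logDeriv_mul_one_sub_norm_sq_le {g : ℂ → ℂ} {p : ℕ}
    (hp : AtMostToOneOn g (ball 0 1) p) (hg : DifferentiableOn ℂ g (ball 0 1))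
    (hne : ∀ z ∈ ball 0 1, g z ≠ 0) {a : ℂ} (ha : a ∈ ball 0 1) :
    ‖logDeriv g a‖ * (1 - ‖a‖ ^ 2) ≤ 4 * p := by
  have mapsTo := mapsTo_diskShift ha
  have bound_at_zero := (hp.comp_injOn mapsTo (injOn_diskShift ha)).norm_logDeriv_mul_le one_pos
    (hg.comp (differentiableOn_diskShift ha) mapsTo) fun z hz ↦ hne _ (mapsTo hz)
  have hga : DifferentiableAt ℂ g (diskShift a 0) := by
    rw [diskShift_zero]
    exact hg.differentiableAt (isOpen_ball.mem_nhds ha)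
  rwa [logDeriv_comp hga (hasDerivAt_diskShift_zero a).differentiableAt, diskShift_zero,
    (hasDerivAt_diskShift_zero a).deriv, norm_mul, mul_one,
    Complex.norm_of_nonneg (one_sub_norm_sq_pos ha).le] at bound_at_zero

/-! ### Growth along radii -/

lemma hasDerivAt_log_one_add_div_one_sub {x : ℝ} (hx : x ∈ Ioo (-1) 1) :
    HasDerivAt (fun x ↦ Real.log ((1 + x) / (1 - x))) (2 / (1 - x ^ 2)) x := by
  have half := Real.hasDerivAt_half_log_one_add_div_one_sub_sub_sum_range 0 hx.1 hx.2
  simp only [Finset.range_zero, Finset.sum_empty, sub_zero, pow_zero] at half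
  simpa only [← mul_assoc, mul_one_div_cancel (two_ne_zero (α := ℝ)), one_mul, mul_one_div]
    using half.const_mul 2

lemma norm_ofReal_mul_of_nonneg {t : ℝ} (ht : 0 ≤ t) (z : ℂ) : ‖(t : ℂ) * z‖ = t * ‖z‖ := by
  rw [norm_mul, Complex.norm_of_nonneg ht]

lemma norm_sub_le_mul_log_of_norm_deriv_mul_le {E : Type*} [NormedAddCommGroup E]
    [NormedSpace ℂ E] {F F' : ℂ → E} {C : ℝ} (hF : ∀ z ∈ ball 0 1, HasDerivAt F (F' z) z)
    (hF' : ∀ z ∈ ball 0 1, ‖F' z‖ * (1 - ‖z‖ ^ 2) ≤ 2 * C) {z : ℂ} (hz : z ∈ ball 0 1) :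
    ‖F z - F 0‖ ≤ C * Real.log ((1 + ‖z‖) / (1 - ‖z‖)) := by
  have radius_mem : ∀ t ∈ Icc (0 : ℝ) 1, t * ‖z‖ ∈ Ico 0 1 := fun t ht ↦
    ⟨mul_nonneg ht.1 (norm_nonneg z),
      (mul_le_of_le_one_left (norm_nonneg z) ht.2).trans_lt (mem_ball_zero_iff.mp hz)⟩
  have segment_mem : ∀ t ∈ Icc (0 : ℝ) 1, (t : ℂ) * z ∈ ball 0 1 := fun t ht ↦ by
    rw [mem_ball_zero_iff, norm_ofReal_mul_of_nonneg ht.1]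
    exact (radius_mem t ht).2
  have F_hasDerivAt : ∀ t ∈ Icc (0 : ℝ) 1,
      HasDerivAt (fun t : ℝ ↦ F (t * z) - F 0) (z • F' (t * z)) t := fun t ht ↦
    ((hF _ (segment_mem t ht)).scomp t
      (hasDerivAt_mul_const z).comp_ofReal).sub_const _
  have log_hasDerivAt : ∀ t ∈ Icc (0 : ℝ) 1,
      HasDerivAt (fun t : ℝ ↦ C * Real.log ((1 + t * ‖z‖) / (1 - t * ‖z‖)))
        (C * (2 / (1 - (t * ‖z‖) ^ 2) * ‖z‖)) t := by
    intro t ht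
    have log_hasDerivAt_radius := hasDerivAt_log_one_add_div_one_sub
      (Ico_subset_Ioo_left neg_one_lt_zero (radius_mem t ht))
    exact (log_hasDerivAt_radius.comp t (hasDerivAt_mul_const ‖z‖)).const_mul C
  have norm_deriv_le : ∀ t ∈ Ico (0 : ℝ) 1,
      ‖z • F' (t * z)‖ ≤ C * (2 / (1 - (t * ‖z‖) ^ 2) * ‖z‖) := by
    intro t ht
    have mem := segment_mem t (Ico_subset_Icc_self ht)
    have bound := (le_div_iff₀ (one_sub_norm_sq_pos mem)).mpr (hF' _ mem)
    rw [norm_ofReal_mul_of_nonneg ht.1] at bound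
    calc ‖z • F' (t * z)‖ = ‖F' (t * z)‖ * ‖z‖ := by rw [norm_smul, mul_comm]
      _ ≤ 2 * C / (1 - (t * ‖z‖) ^ 2) * ‖z‖ := by gcongr
      _ = C * (2 / (1 - (t * ‖z‖) ^ 2) * ‖z‖) := by ring
  simpa using image_norm_le_of_norm_deriv_right_le_deriv_boundary'
    (fun t ht ↦ (F_hasDerivAt t ht).continuousAt.continuousWithinAt)
    (fun t ht ↦ (F_hasDerivAt t (Ico_subset_Icc_self ht)).hasDerivWithinAt)
    (by simp) (fun t ht ↦ (log_hasDerivAt t ht).continuousAt.continuousWithinAt)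
    (fun t ht ↦ (log_hasDerivAt t (Ico_subset_Icc_self ht)).hasDerivWithinAt)
    norm_deriv_le (right_mem_Icc.mpr zero_le_one)

theorem AtMostToOneOn.distortion {g : ℂ → ℂ} {p : ℕ} (hp : AtMostToOneOn g (ball 0 1) p)
    (hg : DifferentiableOn ℂ g (ball 0 1)) (hne : ∀ z ∈ ball 0 1, g z ≠ 0) {z : ℂ}
    (hz : z ∈ ball 0 1) :
    ((1 - ‖z‖) / (1 + ‖z‖)) ^ (2 * p) * ‖g 0‖ ≤ ‖g z‖ ∧
      ‖g z‖ ≤ ((1 + ‖z‖) / (1 - ‖z‖)) ^ (2 * p) * ‖g 0‖ := by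
  obtain ⟨F, hF⟩ := exists_forall_mem_ball_hasDerivAt_logDeriv_and_exp_eq one_pos hg hne
  set L := (1 + ‖z‖) / (1 - ‖z‖) with hL
  have L_pos : 0 < L := div_pos (by positivity) (sub_pos.mpr (mem_ball_zero_iff.mp hz))
  have norm_sub_le : ‖F z - F 0‖ ≤ (2 * p : ℕ) * Real.log L := by
    refine norm_sub_le_mul_log_of_norm_deriv_mul_le (fun w hw ↦ (hF w hw).1) (fun w hw ↦ ?_) hz
    refine (hp.norm_logDeriv_mul_one_sub_norm_sq_le hg hne hw).trans_eq ?_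
    push_cast
    ring
  have re_bounds := abs_le.mp ((Complex.abs_re_le_norm _).trans norm_sub_le)
  rw [Complex.sub_re] at re_bounds
  have exp_log_pow : Real.exp ((2 * p : ℕ) * Real.log L) = L ^ (2 * p) := by
    rw [Real.exp_nat_mul, Real.exp_log L_pos]
  rw [← (hF z hz).2, ← (hF 0 (mem_ball_self one_pos)).2, Complex.norm_exp, Complex.norm_exp,
    ← inv_div, ← hL, inv_pow, ← exp_log_pow, ← Real.exp_neg, ← Real.exp_add, ← Real.exp_add,
    Real.exp_le_exp, Real.exp_le_exp]
  constructor <;> linarith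

/-! ### Valency and orders of vanishing -/

lemma ordAt_eq_analyticOrderAt (g : ℂ → ℂ) (z : ℂ) : ordAt g z = analyticOrderAt g z := by
  by_cases hg : AnalyticAt ℂ g z
  · exact dif_pos hg
  · rw [ordAt, dif_neg hg, analyticOrderAt_of_not_analyticAt hg]

lemma summable_enat {ι : Type*} (u : ι → ℕ∞) : Summable u :=
  (hasSum_of_isLUB _ (isLUB_sSup _)).summable

lemma encard_le_tsum_of_one_le {ι : Type*} {u : ι → ℕ∞} {S : Set ι} (hu : ∀ i ∈ S, 1 ≤ u i) :
    S.encard ≤ ∑' i, u i := by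
  refine ENat.forall_natCast_le_iff_le.mp fun n hn ↦ ?_
  obtain ⟨T, hTS, hT⟩ := exists_subset_encard_eq hn
  have T_finite : T.Finite := finite_of_encard_eq_coe hT
  calc (n : ℕ∞) = T_finite.toFinset.card := by rw [← hT, T_finite.encard_eq_coe_toFinset_card]
    _ = ∑ _i ∈ T_finite.toFinset, 1 := by simp
    _ ≤ ∑ i ∈ T_finite.toFinset, u i :=
      Finset.sum_le_sum fun i hi ↦ hu i (hTS (T_finite.mem_toFinset.mp hi))
    _ ≤ ∑' i, u i := (summable_enat u).sum_le_tsum _ fun _ _ ↦ zero_le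

lemma IsPValentOn.atMostToOneOn {g : ℂ → ℂ} {Ω : Set ℂ} {p : ℕ} (hp : IsPValentOn g Ω p)
    (hg : AnalyticOnNhd ℂ g Ω) : AtMostToOneOn g Ω p := by
  intro c
  set zeros : Set Ω := {z | g z = c}
  have fiber_eq : Ω ∩ g ⁻¹' {c} = Subtype.val '' zeros := by ext; simp [zeros, and_comm]
  have one_le_ordAt : ∀ z ∈ zeros, 1 ≤ ordAt (fun w ↦ g w - c) z := by
    intro z hz
    rw [ordAt_eq_analyticOrderAt, Order.one_le_iff_ne_zero]
    exact ((hg z z.2).sub analyticAt_const).analyticOrderAt_ne_zero.mpr (sub_eq_zero.mpr hz)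
  rw [fiber_eq, Subtype.val_injective.encard_image]
  exact (encard_le_tsum_of_one_le one_le_ordAt).trans (hp c)

lemma IsSPValentOn.isPValentOn_of_eq_eval_mul {f g : ℂ → ℂ} {Ω : Set ℂ} {s p : ℕ}
    (hf : IsSPValentOn f Ω s p) (hΩ : IsOpen Ω) (hg : AnalyticOnNhd ℂ g Ω)
    {P : Polynomial ℂ} (hP : P.degree ≤ s) (hfg : ∀ z ∈ Ω, f z = P.eval z * g z) :
    IsPValentOn g Ω p := by
  intro c
  have hcP : (Polynomial.C c * P).degree ≤ s := by
    rw [← Polynomial.smul_eq_C_mul]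
    exact (Polynomial.degree_smul_le c P).trans hP
  refine le_trans ((summable_enat _).tsum_le_tsum (fun z ↦ ?_) (summable_enat _)) (hf _ hcP)
  have sub_analyticAt : AnalyticAt ℂ (fun w ↦ g w - c) z := (hg z z.2).sub analyticAt_const
  have sub_eq_mul : (fun w ↦ f w - (Polynomial.C c * P).eval w) =ᶠ[nhds (z : ℂ)]
      (fun w ↦ P.eval w) * fun w ↦ g w - c := by
    filter_upwards [hΩ.mem_nhds z.2] with w hw
    rw [hfg w hw, Polynomial.eval_mul, Polynomial.eval_C, Pi.mul_apply]
    ring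
  rw [ordAt_eq_analyticOrderAt, ordAt_eq_analyticOrderAt, analyticOrderAt_congr sub_eq_mul,
    analyticOrderAt_mul (AnalyticOnNhd.eval_polynomial P z (mem_univ _)) sub_analyticAt]
  exact le_add_self

lemma analyticOrderAt_sub_const {𝕜 : Type*} [NontriviallyNormedField 𝕜] [DecidableEq 𝕜]
    (c z : 𝕜) : analyticOrderAt (· - c) z = if c = z then 1 else 0 := by
  split_ifs with h
  · rw [h, analyticOrderAt_id_sub_const_self]
  · exact analyticOrderAt_id_sub_const_of_ne (Ne.symm h)

lemma analyticOrderAt_fun_prod {𝕜 ι : Type*} [NontriviallyNormedField 𝕜] {h : ι → 𝕜 → 𝕜}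
    {z : 𝕜} (s : Finset ι) (hh : ∀ i ∈ s, AnalyticAt 𝕜 (h i) z) :
    analyticOrderAt (fun w ↦ ∏ i ∈ s, h i w) z = ∑ i ∈ s, analyticOrderAt (h i) z := by
  induction s using Finset.cons_induction with
  | empty => simp [analyticOrderAt_eq_zero]
  | cons i s hi ih =>
    rw [Finset.forall_mem_cons] at hh
    simp only [Finset.prod_cons, Finset.sum_cons]
    rw [← ih hh.2]
    exact analyticOrderAt_mul hh.1 (Finset.analyticAt_fun_prod s hh.2)

lemma analyticOrderAt_prod_sub {𝕜 ι : Type*} [NontriviallyNormedField 𝕜] [Fintype ι]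
    (x : ι → 𝕜) (z : 𝕜) :
    analyticOrderAt (fun w ↦ ∏ j, (w - x j)) z = ({j | x j = z} : Set ι).ncard := by
  classical
  rw [analyticOrderAt_fun_prod _ fun j _ ↦ by fun_prop, ncard_eq_toFinset_card']
  simp only [analyticOrderAt_sub_const, Finset.sum_boole, toFinset_ofPred]

lemma ne_zero_of_analyticOrderAt_eq_ncard {𝕜 ι : Type*} [NontriviallyNormedField 𝕜] [Fintype ι]
    {f g : 𝕜 → 𝕜} {x : ι → 𝕜} {A z : 𝕜} (hg : AnalyticAt 𝕜 g z)
    (hfg : ∀ᶠ w in nhds z, f w = (A * ∏ j, (w - x j)) * g w)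
    (hord : analyticOrderAt f z = ({j | x j = z} : Set ι).ncard) : g z ≠ 0 := by
  have prod_analyticAt : AnalyticAt 𝕜 (fun w ↦ ∏ j, (w - x j)) z :=
    Finset.analyticAt_fun_prod _ fun j _ ↦ by fun_prop
  have cofactor_analyticAt : AnalyticAt 𝕜 (fun w ↦ A * g w) z := analyticAt_const.mul hg
  have f_eq_mul : f =ᶠ[nhds z] (fun w ↦ ∏ j, (w - x j)) * fun w ↦ A * g w := by
    filter_upwards [hfg] with w hw
    rw [hw, Pi.mul_apply]
    ring
  rw [analyticOrderAt_congr f_eq_mul, analyticOrderAt_mul prod_analyticAt cofactor_analyticAt,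
    analyticOrderAt_prod_sub] at hord
  have cofactor_order : analyticOrderAt (fun w ↦ A * g w) z = 0 :=
    ENat.add_right_injective_of_ne_top (ENat.natCast_ne_top _)
      (hord.trans (add_zero _).symm)
  exact right_ne_zero_of_mul (cofactor_analyticAt.analyticOrderAt_eq_zero.mp cofactor_order)

lemma degree_C_mul_prod_X_sub_C_le {R ι : Type*} [CommRing R] [Fintype ι] (a : R) (x : ι → R) :
    (Polynomial.C a * ∏ j, (Polynomial.X - Polynomial.C (x j))).degree ≤ Fintype.card ι := by
  rw [← Polynomial.smul_eq_C_mul]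
  refine (Polynomial.degree_smul_le a _).trans ((Polynomial.degree_prod_le _ _).trans ?_)
  refine (Finset.sum_le_card_nsmul _ _ 1 fun j _ ↦ Polynomial.degree_X_sub_C_le _).trans ?_
  simp

theorem statement8_general {f g : ℂ → ℂ} {s p : ℕ} {P : Polynomial ℂ}
    (hval : IsSPValentOn f (ball 0 1) s p) (hP : P.degree ≤ s)
    (hg : AnalyticOnNhd ℂ g (ball 0 1)) (hne : ∀ z ∈ ball 0 1, g z ≠ 0)
    (hfg : ∀ z ∈ ball 0 1, f z = P.eval z * g z) {z : ℂ} (hz : z ∈ ball 0 1) :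
    ((1 - ‖z‖) / (1 + ‖z‖)) ^ (2 * p) * ‖g 0‖ ≤ ‖g z‖ ∧
      ‖g z‖ ≤ ((1 + ‖z‖) / (1 - ‖z‖)) ^ (2 * p) * ‖g 0‖ :=
  ((hval.isPValentOn_of_eq_eval_mul isOpen_ball hg hP hfg).atMostToOneOn hg).distortion
    hg.differentiableOn hne hz

/-- Distortion theorem: let `f` be `(s,p)`-valent in the unit disk, having there exactly
`s` zeroes `x 0, …, x (s-1)` (counted with multiplicity). Let `P(z) = A ∏ (z - x j)` with
`A` chosen so that the analytic quotient `g = f / P` has constant term `g 0 = 1`. Then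
`((1-|z|)/(1+|z|))^{2p} ≤ |f(z)/P(z)| = |g(z)| ≤ ((1+|z|)/(1-|z|))^{2p}` on the disk. -/
theorem statement8 (f : ℂ → ℂ) (s p : ℕ) (x : Fin s → ℂ) (A : ℂ) (g : ℂ → ℂ)
    (hf : AnalyticOnNhd ℂ f (Metric.ball (0 : ℂ) 1))
    (hval : IsSPValentOn f (Metric.ball (0 : ℂ) 1) s p)
    (hx : ∀ j, x j ∈ Metric.ball (0 : ℂ) 1)
    (hzeros : ∀ z ∈ Metric.ball (0 : ℂ) 1,
      ordAt f z = (({j : Fin s | x j = z} : Set (Fin s)).ncard : ℕ∞))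
    (hg : AnalyticOnNhd ℂ g (Metric.ball (0 : ℂ) 1))
    (hfactor : ∀ z ∈ Metric.ball (0 : ℂ) 1,
      f z = (A * ∏ j, (z - x j)) * g z)
    (hg0 : g 0 = 1) :
    ∀ z ∈ Metric.ball (0 : ℂ) 1,
      ((1 - ‖z‖) / (1 + ‖z‖)) ^ (2 * p) ≤ ‖g z‖ ∧
      ‖g z‖ ≤
        ((1 + ‖z‖) / (1 - ‖z‖)) ^ (2 * p) := by
  intro z hz
  have hne : ∀ w ∈ ball 0 1, g w ≠ 0 := fun w hw ↦
    ne_zero_of_analyticOrderAt_eq_ncard (hg w hw)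
      (Filter.eventually_of_mem (isOpen_ball.mem_nhds hw) hfactor)
      ((ordAt_eq_analyticOrderAt f w).symm.trans (hzeros w hw))
  have hdeg := degree_C_mul_prod_X_sub_C_le A x
  rw [Fintype.card_fin] at hdeg
  have distortion := statement8_general hval hdeg hg hne
    (by simpa [Polynomial.eval_prod] using hfactor) hz
  simpa only [hg0, norm_one, mul_one] using distortion
end

section
/- Let P(z) be a complex polynomial of degree d ≥ 1 with leading coefficient of absolute value A, let α > 0, and let Z ⊂ D_1 be a set on which |P(z)| ≤ 1. Then A · c_{d,α}(Z)^d ≤ (2·e^{1/α})^d; equivalently, if c_{d,α}(Z) > 0 then A ≤ (2e^{1/α}/c_{d,α}(Z))^d. -/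
/-- The `(d,α)`-Cartan measure of a set `Z ⊆ ℂ`: the infimum of `(∑ r_j^α)^{1/α}` over
all coverings of `Z` by at most `d` disks with positive radii `r_j`. -/
noncomputable def cartanMeasure (d : ℕ) (α : ℝ) (Z : Set ℂ) : ℝ :=
  sInf {t : ℝ | ∃ (p : ℕ) (w : Fin p → ℂ) (r : Fin p → ℝ), p ≤ d ∧ (∀ j, 0 < r j) ∧
    Z ⊆ (⋃ j, Metric.closedBall (w j) (r j)) ∧ t = (∑ j, r j ^ α) ^ (1 / α)}

/-!
This is Cartan's lemma with radii adapted to the exponent `α`. Put `ρ k = H (k / d) ^ (1 / α)` and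
proceed greedily: take the largest `k` for which some ball of radius `ρ k` holds `k` of the `d`
roots of `P`, remove these `k` roots, and repeat. Doubling the balls gives radii `r j` with
`(∑ r j ^ α) ^ (1 / α) = 2 H`, because the numbers `k` add up to `d`. Around a point outside the
doubled balls, the ball of radius `ρ m` holds fewer than `m` roots, for every `m ≥ 1`; so the `m`-th
closest root is farther away than `ρ m`, and the product of the distances to the roots exceeds
`∏ ρ m = H ^ d (d! / d ^ d) ^ (1 / α) ≥ (H / e ^ (1 / α)) ^ d`. For `H` with
`A (H / e ^ (1 / α)) ^ d = 1`, the doubled balls therefore cover `Z`.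
-/

section Sparse

open Finset

variable {ι : Type*} {ρ : ℕ → ℝ} {S : Finset ι} {f : ι → ℝ}

/-- For every `m ≥ 1`, fewer than `m` of the numbers `f i`, `i ∈ S`, are at most `ρ m`; that is,
the `m`-th smallest of them, if there is one, exceeds `ρ m`. With `f i` the distance from `x` to
the `i`-th root, this is the property of the points `x` outside the exceptional balls of Cartan's
lemma. -/
def IsCartanSparse (ρ : ℕ → ℝ) (S : Finset ι) (f : ι → ℝ) : Prop :=
  ∀ m, 0 < m → #{i ∈ S | f i ≤ ρ m} < m

namespace IsCartanSparse

lemma subset {T : Finset ι} (h : IsCartanSparse ρ S f) (hTS : T ⊆ S) : IsCartanSparse ρ T f :=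
  fun m hm ↦ (card_le_card (filter_subset_filter _ hTS)).trans_lt (h m hm)

lemma exists_lt (h : IsCartanSparse ρ S f) (hS : S.Nonempty) : ∃ i ∈ S, ρ #S < f i := by
  by_contra! hle
  have hlt := h #S hS.card_pos
  rw [filter_true_of_mem hle] at hlt
  exact lt_irrefl _ hlt

lemma prod_le_prod (hρ : ∀ k, 0 < k → 0 < ρ k) (h : IsCartanSparse ρ S f) :
    ∏ k ∈ range #S, ρ (k + 1) ≤ ∏ i ∈ S, f i := by
  classical
  induction S using Finset.strongInduction with
  | H S ih =>
    rcases S.eq_empty_or_nonempty with rfl | hS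
    · simp
    obtain ⟨i, hi, hlt⟩ := h.exists_lt hS
    have herase := ih _ (erase_ssubset hi) (h.subset (erase_subset i S))
    rw [← card_erase_add_one hi] at hlt ⊢
    rw [prod_range_succ, ← prod_erase_mul S f hi]
    have hprod : 0 ≤ ∏ k ∈ range #(S.erase i), ρ (k + 1) :=
      prod_nonneg fun k _ ↦ (hρ _ k.succ_pos).le
    exact mul_le_mul herase hlt.le (hρ _ (Nat.succ_pos _)).le (hprod.trans herase)

lemma prod_lt_prod (hρ : ∀ k, 0 < k → 0 < ρ k) (h : IsCartanSparse ρ S f) (hS : S.Nonempty) :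
    ∏ k ∈ range #S, ρ (k + 1) < ∏ i ∈ S, f i := by
  classical
  obtain ⟨i, hi, hlt⟩ := h.exists_lt hS
  have herase := prod_le_prod hρ (h.subset (erase_subset i S))
  rw [← card_erase_add_one hi] at hlt ⊢
  rw [prod_range_succ, ← prod_erase_mul S f hi]
  have hprod : 0 < ∏ k ∈ range #(S.erase i), ρ (k + 1) := prod_pos fun k _ ↦ hρ _ k.succ_pos
  exact mul_lt_mul' herase hlt (hρ _ (Nat.succ_pos _)).le (hprod.trans_le herase)

end IsCartanSparse

end Sparse

section Covering

open Finset

variable {ι X : Type*} [PseudoMetricSpace X] {ρ : ℕ → ℝ} {S : Finset ι} {z : ι → X}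

lemma exists_maximal_concentrated_ball (hρ : Monotone ρ) (hρ₁ : 0 ≤ ρ 1) (z : ι → X)
    (hS : S.Nonempty) :
    ∃ (w : X) (k : ℕ), 0 < k ∧ #{i ∈ S | dist w (z i) ≤ ρ k} = k ∧
      ∀ x m, k < m → #{i ∈ S | dist x (z i) ≤ ρ m} < m := by
  classical
  let Concentrated (k : ℕ) : Prop := ∃ w, k ≤ #{i ∈ S | dist w (z i) ≤ ρ k}
  have le_card {k} : Concentrated k → k ≤ #S := fun ⟨_, hw⟩ ↦ hw.trans (card_filter_le _ _)
  have concentrated_one : Concentrated 1 := by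
    obtain ⟨i, hi⟩ := hS
    exact ⟨z i, card_pos.mpr ⟨i, mem_filter.mpr ⟨hi, by rwa [dist_self]⟩⟩⟩
  set k := Nat.findGreatest Concentrated #S
  have le_greatest {m} (hm : Concentrated m) : m ≤ k := Nat.le_findGreatest (le_card hm) hm
  obtain ⟨w, hw⟩ : Concentrated k := Nat.findGreatest_spec hS.card_pos concentrated_one
  refine ⟨w, k, le_greatest concentrated_one, (le_greatest ⟨w, ?_⟩).antisymm hw, ?_⟩
  · exact card_le_card (monotone_filter_right S fun _ _ hi ↦ hi.trans (hρ hw))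
  · intro x m hkm
    by_contra! hm
    exact hkm.not_ge (le_greatest ⟨x, hm⟩)

lemma isCartanSparse_of_two_mul_lt_dist (hρ : Monotone ρ) {w x : X} {k : ℕ}
    (hmax : ∀ m, k < m → #{i ∈ S | dist x (z i) ≤ ρ m} < m) (hx : 2 * ρ k < dist x w)
    (h : IsCartanSparse ρ {i ∈ S | ¬ dist w (z i) ≤ ρ k} fun i ↦ dist x (z i)) :
    IsCartanSparse ρ S fun i ↦ dist x (z i) := by
  intro m hm
  rcases lt_or_ge k m with hkm | hmk
  · exact hmax m hkm
  refine (card_le_card fun i hi ↦ ?_).trans_lt (h m hm)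
  obtain ⟨hiS, hxi⟩ := mem_filter.mp hi
  refine mem_filter.mpr ⟨mem_filter.mpr ⟨hiS, fun hwi ↦ ?_⟩, hxi⟩
  linarith [dist_triangle_right x w (z i), hρ hmk]

theorem exists_balls_isCartanSparse_outside (hρ : Monotone ρ) (hρ₁ : 0 ≤ ρ 1) (S : Finset ι)
    (z : ι → X) :
    ∃ (p : ℕ) (w : Fin p → X) (k : Fin p → ℕ), (∀ j, 0 < k j) ∧ ∑ j, k j = #S ∧
      ∀ x, (∀ j, 2 * ρ (k j) < dist x (w j)) → IsCartanSparse ρ S fun i ↦ dist x (z i) := by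
  induction S using Finset.strongInduction with
  | H S ih =>
    rcases S.eq_empty_or_nonempty with rfl | hS
    · exact ⟨0, Fin.elim0, Fin.elim0, fun j ↦ j.elim0, by simp, fun x _ m hm ↦ by simpa using hm⟩
    obtain ⟨w₀, k₀, hk₀, hcard, hmax⟩ := exists_maximal_concentrated_ball hρ hρ₁ z hS
    obtain ⟨i, hi⟩ := card_pos.mp (hk₀.trans_eq hcard.symm)
    have hsub : {i ∈ S | ¬ dist w₀ (z i) ≤ ρ k₀} ⊂ S :=
      filter_ssubset.mpr ⟨i, (mem_filter.mp hi).1, not_not.mpr (mem_filter.mp hi).2⟩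
    obtain ⟨p, w, k, hk, hsum, hsparse⟩ := ih _ hsub
    refine ⟨p + 1, Fin.cons w₀ w, Fin.cons k₀ k, Fin.cases hk₀ hk, ?_, fun x hx ↦ ?_⟩
    · rw [Fin.sum_cons, hsum, ← card_filter_add_card_filter_not (s := S)
        (fun i ↦ dist w₀ (z i) ≤ ρ k₀), hcard]
    · exact isCartanSparse_of_two_mul_lt_dist hρ (hmax x) (hx 0) (hsparse x fun j ↦ hx j.succ)

end Covering

section Radii

open Finset

/-- The radius `H (k / d) ^ (1 / α)` allotted to a ball holding `k` of `d` points. The `α`-th power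
of the radius is proportional to `k`, so the `α`-th powers of radii with `∑ k = d` add up to
`H ^ α`. -/
noncomputable def cartanRadius (d : ℕ) (α H : ℝ) (k : ℕ) : ℝ :=
  H * ((k : ℝ) / d) ^ (1 / α)

variable {d : ℕ} {α H : ℝ}

lemma monotone_cartanRadius (hα : 0 ≤ α) (hH : 0 ≤ H) : Monotone (cartanRadius d α H) := by
  intro k l hkl
  unfold cartanRadius
  gcongr

lemma cartanRadius_pos (hd : d ≠ 0) (hH : 0 < H) {k : ℕ} (hk : 0 < k) :
    0 < cartanRadius d α H k := by
  unfold cartanRadius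
  positivity

lemma cartanRadius_rpow (hα : α ≠ 0) (hH : 0 ≤ H) (k : ℕ) :
    cartanRadius d α H k ^ α = H ^ α * (k / d) := by
  rw [cartanRadius, Real.mul_rpow hH (by positivity), one_div,
    Real.rpow_inv_rpow (by positivity) hα]

lemma sum_cartanRadius_rpow {ι : Type*} [Fintype ι] (hα : α ≠ 0) (hH : 0 ≤ H) (hd : d ≠ 0)
    {k : ι → ℕ} (hk : ∑ j, k j = d) :
    (∑ j, cartanRadius d α H (k j) ^ α) ^ (1 / α) = H := by
  have hsum : ∑ j, (k j : ℝ) / d = 1 := by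
    rw [← sum_div, ← Nat.cast_sum, hk, div_self (Nat.cast_ne_zero.mpr hd)]
  simp_rw [cartanRadius_rpow hα hH]
  rw [← mul_sum, hsum, mul_one, one_div, Real.rpow_rpow_inv hH hα]

lemma exp_neg_le_factorial_div_pow (d : ℕ) : Real.exp (-d) ≤ (d.factorial : ℝ) / d ^ d := by
  rcases eq_or_ne d 0 with rfl | hd
  · simp
  rw [Real.exp_neg, ← inv_div]
  exact inv_anti₀ (by positivity) (Real.pow_div_factorial_le_exp _ d.cast_nonneg d)

lemma prod_cartanRadius (d : ℕ) (α H : ℝ) :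
    ∏ k ∈ range d, cartanRadius d α H (k + 1) =
      H ^ d * ((d.factorial : ℝ) / d ^ d) ^ (1 / α) := by
  simp_rw [cartanRadius]
  rw [prod_mul_distrib, Real.finsetProd_rpow _ _ fun k _ ↦ by positivity, prod_div_distrib,
    ← Nat.cast_prod, prod_range_add_one_eq_factorial]
  simp

lemma div_exp_pow_le_prod_cartanRadius (hα : 0 ≤ α) (hH : 0 ≤ H) :
    (H / Real.exp (1 / α)) ^ d ≤ ∏ k ∈ range d, cartanRadius d α H (k + 1) := by
  rw [prod_cartanRadius]
  calc (H / Real.exp (1 / α)) ^ d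
      = H ^ d * Real.exp (-d) ^ (1 / α) := by
        rw [div_eq_mul_inv, ← Real.exp_neg, mul_pow, ← Real.exp_nat_mul, ← Real.exp_mul,
          mul_neg, neg_mul]
    _ ≤ H ^ d * ((d.factorial : ℝ) / d ^ d) ^ (1 / α) := by
        gcongr
        exact exp_neg_le_factorial_div_pow d

end Radii

section CartanLemma

open Finset

variable {α H : ℝ}

theorem exists_balls_lt_prod_dist_outside {ι X : Type*} [PseudoMetricSpace X] (hα : 0 < α)
    (hH : 0 < H) {S : Finset ι} (hS : S.Nonempty) (z : ι → X) :
    ∃ (p : ℕ) (w : Fin p → X) (r : Fin p → ℝ), p ≤ #S ∧ (∀ j, 0 < r j) ∧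
      (∑ j, r j ^ α) ^ (1 / α) = 2 * H ∧
      ∀ x, (∀ j, r j < dist x (w j)) → (H / Real.exp (1 / α)) ^ #S < ∏ i ∈ S, dist x (z i) := by
  have hcard : #S ≠ 0 := hS.card_ne_zero
  have hpos (k : ℕ) (hk : 0 < k) : 0 < cartanRadius #S α H k := cartanRadius_pos hcard hH hk
  obtain ⟨p, w, k, hk, hsum, hsparse⟩ := exists_balls_isCartanSparse_outside
    (monotone_cartanRadius hα.le hH.le) (hpos 1 one_pos).le S z
  refine ⟨p, w, fun j ↦ 2 * cartanRadius #S α H (k j), ?_, ?_, ?_, fun x hx ↦ ?_⟩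
  · calc p = ∑ _j : Fin p, 1 := by simp
      _ ≤ ∑ j, k j := sum_le_sum fun j _ ↦ hk j
      _ = #S := hsum
  · exact fun j ↦ mul_pos two_pos (hpos _ (hk j))
  · have htwo (m : ℕ) : 2 * cartanRadius #S α H m = cartanRadius #S α (2 * H) m :=
      (mul_assoc _ _ _).symm
    simp_rw [htwo]
    exact sum_cartanRadius_rpow hα.ne' (by positivity) hcard hsum
  · exact (div_exp_pow_le_prod_cartanRadius hα.le hH.le).trans_lt
      ((hsparse x hx).prod_lt_prod hpos hS)

variable {K : Type*} [NormedField K] {P : Polynomial K}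

lemma norm_leadingCoeff_pos_of_natDegree_ne_zero (hdeg : P.natDegree ≠ 0) :
    0 < ‖P.leadingCoeff‖ := by
  rw [norm_pos_iff, Polynomial.leadingCoeff_ne_zero]
  exact Polynomial.ne_zero_of_natDegree_gt (Nat.pos_of_ne_zero hdeg)

lemma norm_eval_eq_prod_dist_roots [DecidableEq K] (hP : P.Splits) (x : K) :
    ‖P.eval x‖ = ‖P.leadingCoeff‖ * ∏ i : P.roots, dist x i.1 := by
  rw [hP.eval_eq_prod_roots, norm_mul, ← Multiset.map_univ, ← Finset.prod_eq_multiset_prod,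
    norm_prod]
  simp_rw [dist_eq_norm]

theorem exists_balls_lt_norm_eval_outside (hP : P.Splits) (hdeg : P.natDegree ≠ 0) (hα : 0 < α)
    (hH : 0 < H) :
    ∃ (p : ℕ) (w : Fin p → K) (r : Fin p → ℝ), p ≤ P.natDegree ∧ (∀ j, 0 < r j) ∧
      (∑ j, r j ^ α) ^ (1 / α) = 2 * H ∧
      ∀ x, (∀ j, r j < dist x (w j)) →
        ‖P.leadingCoeff‖ * (H / Real.exp (1 / α)) ^ P.natDegree < ‖P.eval x‖ := by
  classical
  have hcard : #(univ : Finset P.roots) = P.natDegree := by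
    rw [card_univ, Multiset.card_coe, hP.natDegree_eq_card_roots]
  have hroots : (univ : Finset P.roots).Nonempty := card_ne_zero.mp (hcard ▸ hdeg)
  obtain ⟨p, w, r, hp, hr, hsum, hlt⟩ :=
    exists_balls_lt_prod_dist_outside hα hH hroots fun i ↦ i.1
  rw [hcard] at hp hlt
  refine ⟨p, w, r, hp, hr, hsum, fun x hx ↦ ?_⟩
  rw [norm_eval_eq_prod_dist_roots hP]
  exact mul_lt_mul_of_pos_left (hlt x hx) (norm_leadingCoeff_pos_of_natDegree_ne_zero hdeg)

end CartanLemma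

section CartanMeasure

variable {d : ℕ} {α : ℝ} {Z : Set ℂ}

lemma rpow_sum_rpow_nonneg {ι : Type*} [Fintype ι] {r : ι → ℝ} (hr : ∀ j, 0 ≤ r j) (α β : ℝ) :
    0 ≤ (∑ j, r j ^ α) ^ β :=
  Real.rpow_nonneg (Finset.sum_nonneg fun j _ ↦ Real.rpow_nonneg (hr j) α) β

lemma cartanMeasure_nonneg : 0 ≤ cartanMeasure d α Z := by
  apply Real.sInf_nonneg
  rintro _ ⟨p, w, r, -, hr, -, rfl⟩
  exact rpow_sum_rpow_nonneg (fun j ↦ (hr j).le) _ _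

lemma cartanMeasure_le_of_cover {p : ℕ} {w : Fin p → ℂ} {r : Fin p → ℝ} (hp : p ≤ d)
    (hr : ∀ j, 0 < r j) (hZ : Z ⊆ ⋃ j, Metric.closedBall (w j) (r j)) :
    cartanMeasure d α Z ≤ (∑ j, r j ^ α) ^ (1 / α) := by
  refine csInf_le ⟨0, ?_⟩ ⟨p, w, r, hp, hr, hZ, rfl⟩
  rintro _ ⟨p, w, r, -, hr, -, rfl⟩
  exact rpow_sum_rpow_nonneg (fun j ↦ (hr j).le) _ _

theorem cartanMeasure_le_of_norm_eval_le {P : Polynomial ℂ} {H : ℝ} (hdeg : P.natDegree ≠ 0)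
    (hα : 0 < α) (hH : 0 < H)
    (hZ : ∀ z ∈ Z, ‖P.eval z‖ ≤ ‖P.leadingCoeff‖ * (H / Real.exp (1 / α)) ^ P.natDegree) :
    cartanMeasure P.natDegree α Z ≤ 2 * H := by
  obtain ⟨p, w, r, hp, hr, hsum, hlt⟩ :=
    exists_balls_lt_norm_eval_outside (IsAlgClosed.splits P) hdeg hα hH
  refine (cartanMeasure_le_of_cover (w := w) hp hr fun z hz ↦ ?_).trans_eq hsum
  by_contra hout
  simp only [Set.mem_iUnion, Metric.mem_closedBall, not_exists, not_le] at hout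
  exact (hlt z hout).not_ge (hZ z hz)

end CartanMeasure

theorem statement13_general (P : Polynomial ℂ) (d : ℕ) (hd : 1 ≤ d) (hdeg : P.natDegree = d)
    (α : ℝ) (hα : 0 < α) (Z : Set ℂ) (hbd : ∀ z ∈ Z, ‖P.eval z‖ ≤ 1) :
    ‖P.leadingCoeff‖ * cartanMeasure d α Z ^ d ≤ (2 * Real.exp (1 / α)) ^ d := by
  subst hdeg
  have hd₀ : P.natDegree ≠ 0 := Nat.one_le_iff_ne_zero.mp hd
  have hlc : 0 < ‖P.leadingCoeff‖ := norm_leadingCoeff_pos_of_natDegree_ne_zero hd₀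
  obtain ⟨B, hB, hpow⟩ : ∃ B : ℝ, 0 < B ∧ ‖P.leadingCoeff‖ * B ^ P.natDegree = 1 := by
    refine ⟨‖P.leadingCoeff‖⁻¹ ^ (P.natDegree : ℝ)⁻¹, by positivity, ?_⟩
    rw [Real.rpow_inv_natCast_pow (by positivity) hd₀, mul_inv_cancel₀ hlc.ne']
  have hmeasure : cartanMeasure P.natDegree α Z ≤ 2 * (B * Real.exp (1 / α)) := by
    refine cartanMeasure_le_of_norm_eval_le hd₀ hα (by positivity) fun z hz ↦ ?_
    rw [mul_div_cancel_right₀ _ (Real.exp_ne_zero _), hpow]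
    exact hbd z hz
  calc ‖P.leadingCoeff‖ * cartanMeasure P.natDegree α Z ^ P.natDegree
      ≤ ‖P.leadingCoeff‖ * (2 * (B * Real.exp (1 / α))) ^ P.natDegree := by
        gcongr
        exact cartanMeasure_nonneg
    _ = ‖P.leadingCoeff‖ * B ^ P.natDegree * (2 * Real.exp (1 / α)) ^ P.natDegree := by ring
    _ = (2 * Real.exp (1 / α)) ^ P.natDegree := by rw [hpow, one_mul]

/-- If `P` is a polynomial of degree `d ≥ 1` whose leading coefficient has absolute
value `A`, and `|P| ≤ 1` on `Z ⊆ D₁`, then `A · c_{d,α}(Z)^d ≤ (2 e^{1/α})^d`. -/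
theorem statement13 (P : Polynomial ℂ) (d : ℕ) (hd : 1 ≤ d) (hdeg : P.natDegree = d)
    (α : ℝ) (hα : 0 < α) (Z : Set ℂ) (hZ : Z ⊆ Metric.closedBall (0 : ℂ) 1)
    (hbd : ∀ z ∈ Z, ‖P.eval z‖ ≤ 1) :
    ‖P.leadingCoeff‖ * cartanMeasure d α Z ^ d ≤
      (2 * Real.exp (1 / α)) ^ d :=
  statement13_general P d hd hdeg α hα Z hbd
end
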